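/- Let F be a field and let A_Φ, B_Φ, C_Φ, C₂, D be matrices over F of sizes N×N, N×p, p×N, q×N, and q×p respectively. Over RatFunc F (with primes denoting entrywise application of the canonical map F → RatFunc F and X the indeterminate), define the controller transfer matrix K* := (C₂' − D'*C_Φ') * (X • 1 − (A_Φ' − B_Φ'*C_Φ'))⁻¹ * B_Φ' + D', the matrix K_Φ := C₂' * (X • 1 − A_Φ')⁻¹ * B_Φ' + D', and the differential filter Γ := 1 − C_Φ' * (X • 1 − (A_Φ' − B_Φ'*C_Φ'))⁻¹ * B_Φ'. Then K* = K_Φ * Γ. -/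

import Mathlib

set_option synthInstance.maxHeartbeats 1000000

theorem aux_isUnit {F : Type*} [Field F] {N : ℕ} (A : Matrix (Fin N) (Fin N) F) :
    IsUnit ((RatFunc.X : RatFunc F) • (1 : Matrix (Fin N) (Fin N) (RatFunc F)) -
          A.map RatFunc.C).det := by
  have h : (RatFunc.X : RatFunc F) • (1 : Matrix (Fin N) (Fin N) (RatFunc F)) -
          A.map RatFunc.C =
      (algebraMap (Polynomial F) (RatFunc F)).mapMatrix A.charmatrix := by
    ext i j
    by_cases hij : i = j
    · subst hij
      simp [Matrix.charmatrix_apply_eq]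
    · simp [Matrix.charmatrix_apply_ne _ _ _ hij, hij]
  rw [h, ← RingHom.map_det, isUnit_iff_ne_zero]
  intro h0
  exact A.charpoly_monic.ne_zero
    ((map_eq_zero_iff _ (RatFunc.algebraMap_injective F)).1 h0)

theorem aux_alg {K : Type*} [Field K] {N p q : ℕ}
    (P Q : Matrix (Fin N) (Fin N) K) (B : Matrix (Fin N) (Fin p) K)
    (C : Matrix (Fin p) (Fin N) K) (C₂ : Matrix (Fin q) (Fin N) K)
    (D : Matrix (Fin q) (Fin p) K) (hP : IsUnit P.det) (hQ : IsUnit Q.det)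
    (h : Q = P + B * C) :
    (C₂ - D * C) * Q⁻¹ * B + D = (C₂ * P⁻¹ * B + D) * (1 - C * Q⁻¹ * B) := by
  have h1 : P⁻¹ = Q⁻¹ + P⁻¹ * (B * (C * Q⁻¹)) := by
    calc P⁻¹ = P⁻¹ * (Q * Q⁻¹) := by rw [Matrix.mul_nonsing_inv _ hQ, Matrix.mul_one]
      _ = P⁻¹ * ((P + B * C) * Q⁻¹) := by rw [← h]
      _ = (P⁻¹ * P) * Q⁻¹ + P⁻¹ * (B * (C * Q⁻¹)) := by
        simp only [Matrix.add_mul, Matrix.mul_add, Matrix.mul_assoc]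
      _ = _ := by rw [Matrix.nonsing_inv_mul _ hP, Matrix.one_mul]
  have h2 : C₂ * (P⁻¹ * B) = C₂ * (Q⁻¹ * B) + C₂ * (P⁻¹ * (B * (C * (Q⁻¹ * B)))) := by
    have := congrArg (fun M => C₂ * (M * B)) h1
    simpa only [Matrix.add_mul, Matrix.mul_add, Matrix.mul_assoc] using this
  simp only [Matrix.add_mul, Matrix.mul_sub, Matrix.sub_mul, Matrix.mul_assoc, Matrix.mul_one]
  rw [eq_sub_of_add_eq h2.symm]
  abel

/-- The optimal controller factorizes as `K* = K_Φ Γ`, where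
`K* = (C₂ − D C_Φ)(X·1 − (A_Φ − B_Φ C_Φ))⁻¹ B_Φ + D`,
`K_Φ = C₂ (X·1 − A_Φ)⁻¹ B_Φ + D`, and
`Γ = 1 − C_Φ (X·1 − (A_Φ − B_Φ C_Φ))⁻¹ B_Φ` is the differential filter. -/
theorem controller_eq_KPhi_mul_Gamma {F : Type*} [Field F] {N p q : ℕ}
    (AΦ : Matrix (Fin N) (Fin N) F) (BΦ : Matrix (Fin N) (Fin p) F)
    (CΦ : Matrix (Fin p) (Fin N) F) (C₂ : Matrix (Fin q) (Fin N) F)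
    (D : Matrix (Fin q) (Fin p) F) :
    (C₂.map RatFunc.C - D.map RatFunc.C * CΦ.map RatFunc.C) *
        ((RatFunc.X : RatFunc F) • (1 : Matrix (Fin N) (Fin N) (RatFunc F)) -
          (AΦ.map RatFunc.C - BΦ.map RatFunc.C * CΦ.map RatFunc.C))⁻¹ * BΦ.map RatFunc.C +
      D.map RatFunc.C =
    (C₂.map RatFunc.C *
        ((RatFunc.X : RatFunc F) • (1 : Matrix (Fin N) (Fin N) (RatFunc F)) -
          AΦ.map RatFunc.C)⁻¹ * BΦ.map RatFunc.C + D.map RatFunc.C) *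
    ((1 : Matrix (Fin p) (Fin p) (RatFunc F)) -
      CΦ.map RatFunc.C *
        ((RatFunc.X : RatFunc F) • (1 : Matrix (Fin N) (Fin N) (RatFunc F)) -
          (AΦ.map RatFunc.C - BΦ.map RatFunc.C * CΦ.map RatFunc.C))⁻¹ * BΦ.map RatFunc.C) := by
  refine aux_alg _ _ _ _ _ _ (aux_isUnit AΦ) ?_ (by abel)
  have h := aux_isUnit (AΦ - BΦ * CΦ)
  rwa [Matrix.map_sub _ (map_sub _), Matrix.map_mul] at h
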